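/- Let N ≥ 2 and p > 1, and if N ≥ 3 assume additionally p + 1 < 2N/(N-2). Then there exists α* > 0 such that for every α > α*, no minimizer of the Rayleigh quotient R_{α,p} over the class 𝒞 is radial; that is, every u ∈ 𝒞 with R_{α,p}(u) = S_{α,p} satisfies u(x) ≠ u(y) for some x, y ∈ B with |x| = |y|. -/

import Mathlib

open MeasureTheory Metric Set Filter

noncomputable section

abbrev E (N : ℕ) := EuclideanSpace ℝ (Fin N)

/-- The Laplacian: sum of pure second partial derivatives. -/
def lap {N : ℕ} (u : E N → ℝ) (x : E N) : ℝ :=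
  ∑ i, fderiv ℝ (fun y => fderiv ℝ u y (EuclideanSpace.single i 1)) x (EuclideanSpace.single i 1)
/-- The admissible class 𝒞: C¹ functions on the closed unit ball, vanishing on the
boundary sphere, not identically zero. -/
def memC {N : ℕ} (u : E N → ℝ) : Prop :=
  ContDiffOn ℝ 1 u (closedBall 0 1) ∧
  (∀ x : E N, ‖x‖ = 1 → u x = 0) ∧
  ∃ x ∈ closedBall (0 : E N) 1, u x ≠ 0

/-- The Rayleigh quotient R_{α,p}. -/
def ray {N : ℕ} (α p : ℝ) (u : E N → ℝ) : ℝ :=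
  (∫ x in ball (0 : E N) 1, ‖gradient u x‖ ^ 2) /
    (∫ x in ball (0 : E N) 1, ‖x‖ ^ α * |u x| ^ (p + 1)) ^ (2 / (p + 1))

/-- The ground-state level S_{α,p}. -/
def Sval (N : ℕ) (α p : ℝ) : ℝ := sInf {c | ∃ u : E N → ℝ, memC u ∧ ray α p u = c}

/-- A function is radial if its value depends only on the norm. -/
def radial {N : ℕ} (u : E N → ℝ) : Prop := ∀ x y : E N, ‖x‖ = ‖y‖ → u x = u y

/-- The radial ground-state level S^rad_{α,p}. -/
def SradVal (N : ℕ) (α p : ℝ) : ℝ :=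
  sInf {c | ∃ u : E N → ℝ, memC u ∧ radial u ∧ ray α p u = c}

/-!
Write `p = 2 * q - 1`, and `ω` for the area of the unit sphere. For radial `u ∈ 𝒞`, the fundamental
theorem of calculus and the Cauchy–Schwarz inequality along a ray give
`ω |x|^(N-1) u(x)² ≤ (1 - |x|) ∫ |∇u|²`. Raised to the power `q` and integrated against `|x|^α`,
this bounds the denominator of the Rayleigh quotient by a Beta integral of order `α^(-q-1)`, so the
radial level is at least `c α^(1+1/q)`. On the other hand, a bump of size `1/α` centred at distance
`1/α` from the sphere lives where `|x|^α` is bounded below, and has Rayleigh quotient of order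
`α^(2-N+N/q)`. The first exponent exceeds the second by `(N-1)(1-1/q) > 0`, so for large `α` the
two levels are distinct.
-/

lemma sq_integral_le_measureReal_univ_mul {Ω : Type*} [MeasurableSpace Ω] {μ : Measure Ω}
    [IsFiniteMeasure μ] {f : Ω → ℝ} (hf : Integrable f μ) (hf2 : Integrable (fun x => f x ^ 2) μ) :
    (∫ x, f x ∂μ) ^ 2 ≤ μ.real univ * ∫ x, f x ^ 2 ∂μ := by
  rcases eq_or_ne μ 0 with rfl | hμ
  · simp
  have : NeZero μ := ⟨hμ⟩
  have hm : 0 < μ.real univ := measureReal_univ_pos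
  have jensen := (even_two.convexOn_pow (𝕜 := ℝ)).map_average_le (continuous_pow 2).continuousOn
    isClosed_univ (Eventually.of_forall fun _ => mem_univ _) hf hf2
  simp only [average_eq, smul_eq_mul, mul_pow] at jensen
  calc (∫ x, f x ∂μ) ^ 2 = μ.real univ ^ 2 * ((μ.real univ)⁻¹ ^ 2 * (∫ x, f x ∂μ) ^ 2) := by
        field_simp
    _ ≤ μ.real univ ^ 2 * ((μ.real univ)⁻¹ * ∫ x, f x ^ 2 ∂μ) := by gcongr
    _ = μ.real univ * ∫ x, f x ^ 2 ∂μ := by field_simp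

section Interval

variable {w g : ℝ → ℝ} {a b : ℝ}

lemma integrableOn_mul_deriv_pow (hw : ContinuousOn w (Icc a b)) (hg : ContDiffOn ℝ 1 g (Icc a b))
    (n : ℕ) : IntegrableOn (fun s => w s * deriv g s ^ n) (Ioo a b) := by
  rcases le_or_gt b a with hab | hab
  · simp [hab]
  have hcont : ContinuousOn (fun s => w s * derivWithin g (Icc a b) s ^ n) (Icc a b) :=
    hw.mul ((hg.continuousOn_derivWithin (uniqueDiffOn_Icc hab) le_rfl).pow n)
  refine (hcont.integrableOn_Icc.mono_set Ioo_subset_Icc_self).congr_fun (fun s hs => ?_)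
    measurableSet_Ioo
  simp only [derivWithin_of_mem_nhds (Icc_mem_nhds hs.1 hs.2)]

lemma mul_sq_le_sub_mul_integral_deriv_sq (hab : a ≤ b) (hw : ContinuousOn w (Icc a b))
    (hg : ContDiffOn ℝ 1 g (Icc a b)) (hgb : g b = 0) (hwa : 0 ≤ w a)
    (hmin : ∀ s ∈ Ioo a b, w a ≤ w s) :
    w a * g a ^ 2 ≤ (b - a) * ∫ s in Ioo a b, w s * deriv g s ^ 2 := by
  have ftc : ∫ s in Ioo a b, deriv g s = -g a := by
    rw [← integral_Ioc_eq_integral_Ioo, ← intervalIntegral.integral_of_le hab,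
      intervalIntegral.integral_deriv_of_contDiffOn_Icc hg hab, hgb, zero_sub]
  have hint : IntegrableOn (fun s => deriv g s ^ 2) (Ioo a b) := by
    simpa using integrableOn_mul_deriv_pow (w := 1) continuousOn_const hg 2
  have cauchy_schwarz : g a ^ 2 ≤ (b - a) * ∫ s in Ioo a b, deriv g s ^ 2 := by
    have hint' : IntegrableOn (deriv g) (Ioo a b) := by
      simpa using integrableOn_mul_deriv_pow (w := 1) continuousOn_const hg 1
    simpa [ftc, hab] using sq_integral_le_measureReal_univ_mul hint' hint
  calc w a * g a ^ 2 ≤ w a * ((b - a) * ∫ s in Ioo a b, deriv g s ^ 2) := by gcongr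
    _ = (b - a) * ∫ s in Ioo a b, w a * deriv g s ^ 2 := by rw [integral_const_mul]; ring
    _ ≤ (b - a) * ∫ s in Ioo a b, w s * deriv g s ^ 2 :=
      mul_le_mul_of_nonneg_left
        (setIntegral_mono_on (hint.const_mul _) (integrableOn_mul_deriv_pow hw hg 2)
          measurableSet_Ioo fun s hs => by gcongr; exact hmin s hs) (sub_nonneg.2 hab)

end Interval

lemma integral_rpow_mul_one_sub_rpow_le {γ q : ℝ} (hγ : 0 < γ) (hq : -1 < q) :
    ∫ y in Ioo (0 : ℝ) 1, y ^ γ * (1 - y) ^ q ≤ (1 / γ) ^ (q + 1) * Real.Gamma (q + 1) := by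
  have reflect : ∫ y in Ioo (0 : ℝ) 1, y ^ γ * (1 - y) ^ q
      = ∫ y in Ioo (0 : ℝ) 1, y ^ q * (1 - y) ^ γ := by
    simp only [← integral_Ioc_eq_integral_Ioo, ← intervalIntegral.integral_of_le zero_le_one]
    simpa [mul_comm] using intervalIntegral.integral_comp_sub_left (a := 0) (b := 1)
      (fun y : ℝ => y ^ q * (1 - y) ^ γ) 1
  have hint : IntegrableOn (fun y : ℝ => y ^ q * Real.exp (-(γ * y))) (Ioi 0) := by
    simpa using integrableOn_rpow_mul_exp_neg_mul_rpow hq one_pos hγ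
  have one_sub_rpow_le : ∀ y ∈ Ioo (0 : ℝ) 1, (1 - y) ^ γ ≤ Real.exp (-(γ * y)) := fun y hy => by
    calc (1 - y) ^ γ ≤ Real.exp (-y) ^ γ :=
          Real.rpow_le_rpow (sub_nonneg.2 hy.2.le) (Real.one_sub_le_exp_neg y) hγ.le
      _ = Real.exp (-(γ * y)) := by rw [← Real.exp_mul]; ring_nf
  calc ∫ y in Ioo (0 : ℝ) 1, y ^ γ * (1 - y) ^ q
      = ∫ y in Ioo (0 : ℝ) 1, y ^ q * (1 - y) ^ γ := reflect
    _ ≤ ∫ y in Ioo (0 : ℝ) 1, y ^ q * Real.exp (-(γ * y)) := by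
        refine integral_mono_of_nonneg ?_ (hint.mono_set Ioo_subset_Ioi_self) ?_ <;>
          filter_upwards [ae_restrict_mem measurableSet_Ioo] with y hy
        · exact mul_nonneg (Real.rpow_nonneg hy.1.le _) (Real.rpow_nonneg (sub_nonneg.2 hy.2.le) _)
        · exact mul_le_mul_of_nonneg_left (one_sub_rpow_le y hy) (Real.rpow_nonneg hy.1.le _)
    _ ≤ ∫ y in Ioi (0 : ℝ), y ^ q * Real.exp (-(γ * y)) := by
        refine setIntegral_mono_set hint ?_ Ioo_subset_Ioi_self.eventuallyLE
        filter_upwards [ae_restrict_mem measurableSet_Ioi] with y hy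
        exact mul_nonneg (Real.rpow_nonneg (le_of_lt hy) _) (Real.exp_nonneg _)
    _ = (1 / γ) ^ (q + 1) * Real.Gamma (q + 1) := by
        simpa using Real.integral_rpow_mul_exp_neg_mul_Ioi (neg_lt_iff_pos_add.1 hq) hγ

lemma setIntegral_ball_fun_norm {F : Type*} [NormedAddCommGroup F] [NormedSpace ℝ F]
    [FiniteDimensional ℝ F] [Nontrivial F] [MeasurableSpace F] [BorelSpace F] (μ : Measure F)
    [μ.IsAddHaarMeasure] (R : ℝ) (f : ℝ → ℝ) :
    ∫ x in ball (0 : F) R, f ‖x‖ ∂μ = Module.finrank ℝ F * μ.real (ball 0 1) *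
      ∫ r in Ioo 0 R, r ^ (Module.finrank ℝ F - 1) * f r := by
  have hball : (ball (0 : F) R).indicator (fun x => f ‖x‖) = fun x => (Iio R).indicator f ‖x‖ := by
    ext x
    simp [indicator]
  have hpow : (fun r => r ^ (Module.finrank ℝ F - 1) • (Iio R).indicator f r)
      = (Iio R).indicator fun r => r ^ (Module.finrank ℝ F - 1) * f r :=
    (indicator_smul _ _ _).symm
  rw [← integral_indicator measurableSet_ball, hball, integral_fun_norm_addHaar, hpow,
    setIntegral_indicator measurableSet_Iio, Ioi_inter_Iio, nsmul_eq_mul, smul_eq_mul, mul_assoc]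

lemma integral_abs_rpow_pos {X : Type*} [TopologicalSpace X] [MeasurableSpace X]
    [OpensMeasurableSpace X] {μ : Measure X} [IsFiniteMeasureOnCompacts μ] [μ.IsOpenPosMeasure]
    {f : X → ℝ} {s : ℝ} {x : X} (hs : 0 < s) (hf : Continuous f) (hsupp : HasCompactSupport f)
    (hx : f x ≠ 0) : 0 < ∫ y, |f y| ^ s ∂μ :=
  (hf.abs.rpow_const fun _ => Or.inr hs.le).integral_pos_of_hasCompactSupport_nonneg_nonzero
    (hsupp.comp_left (g := fun y => |y| ^ s) (by simp [Real.zero_rpow hs.ne']))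
    (fun _ => by positivity) (Real.rpow_pos_of_pos (abs_pos.2 hx) s).ne'

lemma norm_gradient {𝕜 F : Type*} [RCLike 𝕜] [NormedAddCommGroup F] [InnerProductSpace 𝕜 F]
    [CompleteSpace F] (f : F → 𝕜) (x : F) : ‖gradient f x‖ = ‖fderiv 𝕜 f x‖ :=
  LinearIsometryEquiv.norm_map _ _

lemma eventually_mul_rpow_lt_mul_rpow {a b c : ℝ} (hab : a < b) (hc : 0 < c) (C : ℝ) :
    ∀ᶠ x : ℝ in atTop, C * x ^ a < c * x ^ b := by
  filter_upwards [(tendsto_rpow_atTop (sub_pos.2 hab)).eventually_gt_atTop (C / c),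
    eventually_gt_atTop 0] with x hx hx0
  rw [← sub_add_cancel b a, Real.rpow_add hx0, ← mul_assoc]
  exact mul_lt_mul_of_pos_right ((div_lt_iff₀' hc).1 hx) (Real.rpow_pos_of_pos hx0 a)

section Admissible

variable {N : ℕ} {u v : E N → ℝ} {α p q s : ℝ}

/-- The Dirichlet energy `∫_B |∇u|²`, the numerator of the Rayleigh quotient. -/
def dirichletEnergy (u : E N → ℝ) : ℝ :=
  ∫ x in ball (0 : E N) 1, ‖gradient u x‖ ^ 2

/-- The Hénon mass `∫_B |x|^α |u|^s`; the denominator of the Rayleigh quotient `R_{α,p}` is a power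
of the one with `s = p + 1`. -/
def henonMass (α s : ℝ) (u : E N → ℝ) : ℝ :=
  ∫ x in ball (0 : E N) 1, ‖x‖ ^ α * |u x| ^ s

lemma ray_two_mul_sub_one (α q : ℝ) (u : E N → ℝ) :
    ray α (2 * q - 1) u = dirichletEnergy u / henonMass α (2 * q) u ^ (1 / q) := by
  have hexp : 2 / (2 * q) = 1 / q := by
    rw [← mul_div_mul_left 1 q two_ne_zero, mul_one]
  rw [ray, dirichletEnergy, henonMass, sub_add_cancel, hexp]

lemma dirichletEnergy_nonneg (u : E N → ℝ) : 0 ≤ dirichletEnergy u :=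
  integral_nonneg fun _ => sq_nonneg _

lemma henonMass_nonneg (α s : ℝ) (u : E N → ℝ) : 0 ≤ henonMass α s u :=
  integral_nonneg fun _ => by positivity

lemma ray_nonneg (α p : ℝ) (u : E N → ℝ) : 0 ≤ ray α p u :=
  div_nonneg (dirichletEnergy_nonneg u) (Real.rpow_nonneg (henonMass_nonneg α (p + 1) u) _)

lemma Sval_le_ray (hu : memC u) : Sval N α p ≤ ray α p u :=
  csInf_le ⟨0, by rintro _ ⟨v, -, rfl⟩; exact ray_nonneg α p v⟩ ⟨u, hu, rfl⟩

lemma SradVal_le_ray (hu : memC u) (hrad : radial u) : SradVal N α p ≤ ray α p u :=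
  csInf_le ⟨0, by rintro _ ⟨v, -, -, rfl⟩; exact ray_nonneg α p v⟩ ⟨u, hu, hrad, rfl⟩

lemma memC_one_sub_norm_sq : memC fun x : E N => 1 - ‖x‖ ^ 2 :=
  ⟨(contDiff_const.sub (contDiff_norm_sq ℝ)).contDiffOn, fun x hx => by simp [hx],
    0, mem_closedBall_self zero_le_one, by simp⟩

lemma le_SradVal {c : ℝ} (h : ∀ u : E N → ℝ, memC u → radial u → c ≤ ray α p u) :
    c ≤ SradVal N α p :=
  le_csInf ⟨_, _, memC_one_sub_norm_sq, fun x y hxy => by simp only [hxy], rfl⟩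
    (by rintro _ ⟨u, hu, hrad, rfl⟩; exact h u hu hrad)

lemma memC.congr (hu : memC u) (huv : EqOn v u (closedBall 0 1)) : memC v := by
  obtain ⟨hdiff, hzero, x, hx, hne⟩ := hu
  exact ⟨hdiff.congr huv, fun y hy => (huv (by simp [hy])).trans (hzero y hy), x, hx,
    by rwa [huv hx]⟩

lemma ray_congr (huv : EqOn u v (ball 0 1)) : ray α p u = ray α p v := by
  have hgrad : EqOn (gradient u) (gradient v) (ball 0 1) := fun x hx => by
    simp only [gradient, (huv.eventuallyEq_of_mem (isOpen_ball.mem_nhds hx)).fderiv_eq]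
  have hnum : ∫ x in ball (0 : E N) 1, ‖gradient u x‖ ^ 2
      = ∫ x in ball (0 : E N) 1, ‖gradient v x‖ ^ 2 :=
    setIntegral_congr_fun measurableSet_ball fun x hx => by simp only [hgrad hx]
  have hden : ∫ x in ball (0 : E N) 1, ‖x‖ ^ α * |u x| ^ (p + 1)
      = ∫ x in ball (0 : E N) 1, ‖x‖ ^ α * |v x| ^ (p + 1) :=
    setIntegral_congr_fun measurableSet_ball fun x hx => by simp only [huv hx]
  rw [ray, ray, hnum, hden]

lemma exists_ne_of_Sval_lt_SradVal (hlt : Sval N α p < SradVal N α p) (hu : memC u)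
    (hmin : ray α p u = Sval N α p) :
    ∃ x y : E N, x ∈ ball (0 : E N) 1 ∧ y ∈ ball (0 : E N) 1 ∧ ‖x‖ = ‖y‖ ∧ u x ≠ u y := by
  by_contra! hsymm
  let v : E N → ℝ := (ball 0 1).indicator u
  have hrad : radial v := fun x y hxy => by
    by_cases hx : x ∈ ball (0 : E N) 1
    · have hy : y ∈ ball (0 : E N) 1 := by simpa [← hxy] using hx
      simpa only [v, indicator_of_mem hx, indicator_of_mem hy] using hsymm x y hx hy hxy
    · have hy : y ∉ ball (0 : E N) 1 := by simpa [← hxy] using hx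
      simp only [v, indicator_of_notMem hx, indicator_of_notMem hy]
  have hvu : EqOn v u (closedBall 0 1) := fun x hx => by
    rcases (mem_closedBall_zero_iff.1 hx).lt_or_eq with hx1 | hx1
    · exact indicator_of_mem (mem_ball_zero_iff.2 hx1) u
    · simp [v, hx1, hu.2.1 x hx1]
  have hray : ray α p v = Sval N α p := (ray_congr (hvu.mono ball_subset_closedBall)).trans hmin
  exact (SradVal_le_ray (hu.congr hvu) hrad).not_gt (hray ▸ hlt)

lemma integrableOn_henonMass (hα : 0 ≤ α) (hs : 0 ≤ s) (hu : ContinuousOn u (closedBall 0 1)) :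
    IntegrableOn (fun x : E N => ‖x‖ ^ α * |u x| ^ s) (ball 0 1) := by
  have hcont : ContinuousOn (fun x : E N => ‖x‖ ^ α * |u x| ^ s) (closedBall 0 1) :=
    (continuous_norm.continuousOn.rpow_const fun _ _ => Or.inr hα).mul
      (hu.abs.rpow_const fun _ _ => Or.inr hs)
  exact (hcont.integrableOn_compact (isCompact_closedBall _ _)).mono_set ball_subset_closedBall

lemma memC.exists_mem_ball_ne_zero (hu : memC u) : ∃ x ∈ ball (0 : E N) 1, u x ≠ 0 := by
  obtain ⟨-, hzero, x, hx, hne⟩ := hu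
  exact ⟨x, mem_ball_zero_iff.2 ((mem_closedBall_zero_iff.1 hx).lt_of_ne fun h => hne (hzero x h)),
    hne⟩

lemma henonMass_pos [NeZero N] (hα : 0 ≤ α) (hs : 0 ≤ s) (hu : memC u) :
    0 < henonMass α s u := by
  have hopen : IsOpen (ball (0 : E N) 1 ∩ u ⁻¹' {0}ᶜ) :=
    (hu.1.continuousOn.mono ball_subset_closedBall).isOpen_inter_preimage isOpen_ball
      isOpen_compl_singleton
  rw [henonMass, setIntegral_pos_iff_support_of_nonneg_ae
    (Eventually.of_forall fun _ => by positivity) (integrableOn_henonMass hα hs hu.1.continuousOn)]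
  calc 0 < volume (ball (0 : E N) 1 ∩ u ⁻¹' {0}ᶜ) :=
        hopen.measure_pos volume hu.exists_mem_ball_ne_zero
    _ = volume ((ball (0 : E N) 1 ∩ u ⁻¹' {0}ᶜ) \ {0}) :=
        (measure_sdiff_null (measure_singleton 0)).symm
    _ ≤ volume (Function.support (fun x : E N => ‖x‖ ^ α * |u x| ^ s) ∩ ball 0 1) :=
        measure_mono fun x ⟨⟨hx, hne⟩, hx0⟩ =>
          ⟨(mul_pos (Real.rpow_pos_of_pos (norm_pos_iff.2 hx0) _)
            (Real.rpow_pos_of_pos (abs_pos.2 hne) _)).ne', hx⟩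

lemma memC.differentiableAt (hu : memC u) {x : E N} (hx : x ∈ ball (0 : E N) 1) :
    DifferentiableAt ℝ u x :=
  (hu.1.differentiableOn one_ne_zero).differentiableAt
    (mem_of_superset (isOpen_ball.mem_nhds hx) ball_subset_closedBall)

lemma memC.integrableOn_norm_gradient_sq (hu : memC u) :
    IntegrableOn (fun x => ‖gradient u x‖ ^ 2) (ball 0 1) := by
  have huniq : UniqueDiffOn ℝ (closedBall (0 : E N) 1) :=
    uniqueDiffOn_convex (convex_closedBall _ _) (by simp [interior_closedBall])
  have hcont : ContinuousOn (fun x => ‖fderivWithin ℝ u (closedBall 0 1) x‖ ^ 2) (closedBall 0 1) :=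
    (hu.1.continuousOn_fderivWithin huniq le_rfl).norm.pow 2
  refine ((hcont.integrableOn_compact (isCompact_closedBall _ _)).mono_set
    ball_subset_closedBall).congr_fun (fun x hx => ?_) measurableSet_ball
  simp only [norm_gradient, fderivWithin_of_mem_nhds
    (mem_of_superset (isOpen_ball.mem_nhds hx) ball_subset_closedBall)]

end Admissible

section Radial

variable {N : ℕ} {u : E N → ℝ} {e x : E N} {α γ q : ℝ}

/-- The area `ω` of the unit sphere of `E N`, as `N` times the volume of the unit ball. -/
def sphereArea (N : ℕ) : ℝ := N * (volume : Measure (E N)).real (ball 0 1)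

lemma sphereArea_pos [NeZero N] : 0 < sphereArea N :=
  mul_pos (Nat.cast_pos.2 (NeZero.pos N))
    (ENNReal.toReal_pos (measure_ball_pos _ _ one_pos).ne' measure_ball_lt_top.ne)

lemma setIntegral_unitBall_fun_norm [NeZero N] (f : ℝ → ℝ) :
    ∫ x in ball (0 : E N) 1, f ‖x‖ = sphereArea N * ∫ r in Ioo (0 : ℝ) 1, r ^ (N - 1) * f r := by
  simpa [sphereArea] using setIntegral_ball_fun_norm (volume : Measure (E N)) 1 f

/-- The restriction of `u` to the line through `e`: if `u` is radial and `e` is a unit vector then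
`u x = profile u e ‖x‖`. -/
def profile (u : E N → ℝ) (e : E N) (t : ℝ) : ℝ := u (t • e)

lemma radial.profile_eq (hrad : radial u) {e' : E N} (he : ‖e‖ = ‖e'‖) :
    profile u e = profile u e' :=
  funext fun t => hrad _ _ (by rw [norm_smul, norm_smul, he])

lemma radial.profile_norm (hrad : radial u) (he : ‖e‖ = 1) (x : E N) : profile u e ‖x‖ = u x :=
  hrad _ _ (by rw [norm_smul, norm_norm, he, mul_one])

lemma memC.contDiffOn_profile (hu : memC u) (he : ‖e‖ = 1) :
    ContDiffOn ℝ 1 (profile u e) (Icc 0 1) :=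
  hu.1.comp (contDiff_id.smul contDiff_const).contDiffOn fun t ht => by
    simpa [norm_smul, he, abs_of_nonneg ht.1] using ht.2

lemma memC.profile_one (hu : memC u) (he : ‖e‖ = 1) : profile u e 1 = 0 := by
  simpa [profile] using hu.2.1 e he

lemma radial.abs_deriv_profile_le (hrad : radial u) (he : ‖e‖ = 1) (hd : DifferentiableAt ℝ u x) :
    |deriv (profile u e) ‖x‖| ≤ ‖gradient u x‖ := by
  obtain ⟨w, hw, hxw⟩ : ∃ w : E N, ‖w‖ = 1 ∧ ‖x‖ • w = x := by
    rcases eq_or_ne x 0 with rfl | hx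
    · exact ⟨e, he, by simp⟩
    · exact ⟨‖x‖⁻¹ • x, norm_smul_inv_norm hx, smul_inv_smul₀ (norm_ne_zero_iff.2 hx) x⟩
  have hderiv : HasDerivAt (profile u w) (fderiv ℝ u x w) ‖x‖ := by
    have hline : HasDerivAt (fun t : ℝ => t • w) w ‖x‖ := by
      simpa using (hasDerivAt_id ‖x‖).smul_const w
    exact HasFDerivAt.comp_hasDerivAt ‖x‖ (by rw [hxw]; exact hd.hasFDerivAt) hline
  rw [hrad.profile_eq (he.trans hw.symm), hderiv.deriv, norm_gradient]
  simpa [hw] using (fderiv ℝ u x).le_opNorm w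

lemma sphereArea_mul_integral_deriv_profile_sq_le [NeZero N] (hu : memC u) (hrad : radial u)
    (he : ‖e‖ = 1) :
    sphereArea N * ∫ r in Ioo (0 : ℝ) 1, r ^ (N - 1) * deriv (profile u e) r ^ 2
      ≤ dirichletEnergy u := by
  rw [← setIntegral_unitBall_fun_norm fun r => deriv (profile u e) r ^ 2]
  refine integral_mono_of_nonneg (Eventually.of_forall fun _ => sq_nonneg _)
    hu.integrableOn_norm_gradient_sq ?_
  filter_upwards [ae_restrict_mem measurableSet_ball] with x hx
  exact sq_le_sq.2 (by simpa using hrad.abs_deriv_profile_le he (hu.differentiableAt hx))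

lemma memC.sphereArea_mul_norm_pow_mul_sq_le [NeZero N] (hu : memC u) (hrad : radial u)
    (hx : x ∈ ball (0 : E N) 1) :
    sphereArea N * (‖x‖ ^ (N - 1) * u x ^ 2) ≤ (1 - ‖x‖) * dirichletEnergy u := by
  obtain ⟨e, he⟩ := exists_norm_eq (E N) zero_le_one
  have hx1 : ‖x‖ ≤ 1 := (mem_ball_zero_iff.1 hx).le
  have hg := hu.contDiffOn_profile he
  have hIcc : Icc ‖x‖ 1 ⊆ Icc 0 1 := Icc_subset_Icc_left (norm_nonneg x)
  have hbound : ‖x‖ ^ (N - 1) * u x ^ 2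
      ≤ (1 - ‖x‖) * ∫ r in Ioo ‖x‖ 1, r ^ (N - 1) * deriv (profile u e) r ^ 2 := by
    rw [← hrad.profile_norm he x]
    exact mul_sq_le_sub_mul_integral_deriv_sq hx1 (continuous_pow _).continuousOn (hg.mono hIcc)
      (hu.profile_one he) (pow_nonneg (norm_nonneg x) _)
      fun r hr => pow_le_pow_left₀ (norm_nonneg x) hr.1.le _
  have henlarge : ∫ r in Ioo ‖x‖ 1, r ^ (N - 1) * deriv (profile u e) r ^ 2
      ≤ ∫ r in Ioo 0 1, r ^ (N - 1) * deriv (profile u e) r ^ 2 := by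
    refine setIntegral_mono_set
      (integrableOn_mul_deriv_pow (continuous_pow _).continuousOn hg 2) ?_
      (Ioo_subset_Ioo_left (norm_nonneg x)).eventuallyLE
    filter_upwards [ae_restrict_mem measurableSet_Ioo] with r hr
    exact mul_nonneg (pow_nonneg hr.1.le _) (sq_nonneg _)
  have hω : 0 ≤ sphereArea N := sphereArea_pos.le
  calc sphereArea N * (‖x‖ ^ (N - 1) * u x ^ 2)
      ≤ sphereArea N * ((1 - ‖x‖) *
          ∫ r in Ioo 0 1, r ^ (N - 1) * deriv (profile u e) r ^ 2) := by
        have := sub_nonneg.2 hx1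
        grw [hbound, henlarge]
    _ = (1 - ‖x‖) * (sphereArea N *
          ∫ r in Ioo 0 1, r ^ (N - 1) * deriv (profile u e) r ^ 2) := mul_left_comm _ _ _
    _ ≤ (1 - ‖x‖) * dirichletEnergy u :=
        mul_le_mul_of_nonneg_left (sphereArea_mul_integral_deriv_profile_sq_le hu hrad he)
          (sub_nonneg.2 hx1)

lemma setIntegral_norm_rpow_mul_one_sub_norm_rpow_le [NeZero N] (hγ : 0 < γ + (N - 1))
    (hq : -1 < q) :
    ∫ x in ball (0 : E N) 1, ‖x‖ ^ γ * (1 - ‖x‖) ^ q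
      ≤ sphereArea N * ((1 / (γ + (N - 1))) ^ (q + 1) * Real.Gamma (q + 1)) := by
  have hpow : ∫ r in Ioo (0 : ℝ) 1, r ^ (N - 1) * (r ^ γ * (1 - r) ^ q)
      = ∫ r in Ioo (0 : ℝ) 1, r ^ (γ + (N - 1)) * (1 - r) ^ q :=
    setIntegral_congr_fun measurableSet_Ioo fun r hr => by
      simp only [← Nat.cast_pred (R := ℝ) (NeZero.pos N), Real.rpow_add_natCast hr.1.ne']
      ring
  rw [setIntegral_unitBall_fun_norm fun r => r ^ γ * (1 - r) ^ q, hpow]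
  exact mul_le_mul_of_nonneg_left (integral_rpow_mul_one_sub_rpow_le hγ hq) sphereArea_pos.le

lemma memC.norm_rpow_mul_abs_rpow_le [NeZero N] (hq : 0 ≤ q) (hu : memC u)
    (hrad : radial u) (hx : x ∈ ball (0 : E N) 1) (hx0 : x ≠ 0) :
    ‖x‖ ^ α * |u x| ^ (2 * q) ≤
      (dirichletEnergy u / sphereArea N) ^ q * (‖x‖ ^ (α - (N - 1) * q) * (1 - ‖x‖) ^ q) := by
  have hx0 : 0 < ‖x‖ := norm_pos_iff.2 hx0
  have hx1 : 0 ≤ 1 - ‖x‖ := sub_nonneg.2 (mem_ball_zero_iff.1 hx).le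
  have hE : 0 ≤ dirichletEnergy u / sphereArea N :=
    div_nonneg (dirichletEnergy_nonneg u) sphereArea_pos.le
  have hbound : ‖x‖ ^ (N - 1) * u x ^ 2 ≤ dirichletEnergy u / sphereArea N * (1 - ‖x‖) := by
    rw [div_mul_eq_mul_div, le_div_iff₀' sphereArea_pos, mul_comm (dirichletEnergy u)]
    exact hu.sphereArea_mul_norm_pow_mul_sq_le hrad hx
  have hsplit : ‖x‖ ^ α = ‖x‖ ^ (α - (N - 1) * q) * (‖x‖ ^ (N - 1)) ^ q := by
    rw [← Real.rpow_natCast_mul hx0.le, Nat.cast_pred (NeZero.pos N), ← Real.rpow_add hx0,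
      sub_add_cancel]
  have habs : |u x| ^ (2 * q) = (u x ^ 2) ^ q := by
    rw [← sq_abs, ← Real.rpow_natCast_mul (abs_nonneg _), Nat.cast_ofNat]
  calc ‖x‖ ^ α * |u x| ^ (2 * q)
      = ‖x‖ ^ (α - (N - 1) * q) * (‖x‖ ^ (N - 1) * u x ^ 2) ^ q := by
        rw [hsplit, habs, mul_assoc, Real.mul_rpow (by positivity) (sq_nonneg _)]
    _ ≤ ‖x‖ ^ (α - (N - 1) * q) * (dirichletEnergy u / sphereArea N * (1 - ‖x‖)) ^ q := by gcongr
    _ = _ := by rw [Real.mul_rpow hE hx1, mul_left_comm]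

lemma memC.henonMass_le_of_radial [NeZero N] (hq : 0 ≤ q) (hα : (N - 1) * q < α) (hu : memC u)
    (hrad : radial u) :
    henonMass α (2 * q) u ≤ (dirichletEnergy u / sphereArea N) ^ q *
      (sphereArea N * ((1 / (α - (N - 1) * (q - 1))) ^ (q + 1) * Real.Gamma (q + 1))) := by
  have hγ : 0 < α - (N - 1) * q := sub_pos.2 hα
  have hN : (0 : ℝ) ≤ N - 1 := sub_nonneg.2 (Nat.one_le_cast.2 NeZero.one_le)
  have hcont : ContinuousOn (fun x : E N => ‖x‖ ^ (α - (N - 1) * q) * (1 - ‖x‖) ^ q)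
      (closedBall 0 1) :=
    (continuous_norm.continuousOn.rpow_const fun _ _ => Or.inr hγ.le).mul
      ((continuous_const.sub continuous_norm).continuousOn.rpow_const fun _ _ => Or.inr hq)
  have hint : IntegrableOn (fun x : E N => ‖x‖ ^ (α - (N - 1) * q) * (1 - ‖x‖) ^ q) (ball 0 1) :=
    (hcont.integrableOn_compact (isCompact_closedBall _ _)).mono_set ball_subset_closedBall
  have hne : ∀ᵐ x : E N ∂volume.restrict (ball 0 1), x ≠ 0 :=
    ae_restrict_of_ae (Measure.ae_ne volume 0)
  calc henonMass α (2 * q) u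
      ≤ ∫ x in ball (0 : E N) 1, (dirichletEnergy u / sphereArea N) ^ q *
          (‖x‖ ^ (α - (N - 1) * q) * (1 - ‖x‖) ^ q) := by
        refine integral_mono_of_nonneg (Eventually.of_forall fun x => by positivity)
          (hint.const_mul _) ?_
        filter_upwards [ae_restrict_mem measurableSet_ball, hne] with x hx hx0
        exact hu.norm_rpow_mul_abs_rpow_le hq hrad hx hx0
    _ ≤ _ := by
        have hE := div_nonneg (dirichletEnergy_nonneg u) (sphereArea_pos (N := N)).le
        rw [integral_const_mul, show α - (N - 1) * (q - 1) = α - (N - 1) * q + (N - 1) by ring]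
        gcongr
        exact setIntegral_norm_rpow_mul_one_sub_norm_rpow_le (by linarith) (by linarith)

lemma le_ray_of_radial [NeZero N] (hq : 0 < q) (hα : (N - 1) * q < α) (hu : memC u)
    (hrad : radial u) :
    sphereArea N * (α - (N - 1) * (q - 1)) ^ (1 + 1 / q) /
      (sphereArea N * Real.Gamma (q + 1)) ^ (1 / q) ≤ ray α (2 * q - 1) u := by
  have hN : (0 : ℝ) ≤ N - 1 := sub_nonneg.2 (Nat.one_le_cast.2 NeZero.one_le)
  have hα0 : 0 ≤ α := (mul_nonneg hN hq.le).trans hα.le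
  have hβ : 0 < α - (N - 1) * (q - 1) := by linarith
  have hω := sphereArea_pos (N := N)
  have hE := dirichletEnergy_nonneg u
  have hroot : henonMass α (2 * q) u ^ (1 / q) ≤
      dirichletEnergy u / sphereArea N * ((sphereArea N * Real.Gamma (q + 1)) ^ (1 / q) /
        (α - (N - 1) * (q - 1)) ^ (1 + 1 / q)) := by
    calc henonMass α (2 * q) u ^ (1 / q)
        ≤ ((dirichletEnergy u / sphereArea N) ^ q * (sphereArea N *
            ((1 / (α - (N - 1) * (q - 1))) ^ (q + 1) * Real.Gamma (q + 1)))) ^ (1 / q) :=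
          Real.rpow_le_rpow (henonMass_nonneg _ _ _) (hu.henonMass_le_of_radial hq.le hα hrad)
            (by positivity)
      _ = _ := by
          rw [mul_left_comm (sphereArea N), Real.mul_rpow (by positivity) (by positivity),
            Real.mul_rpow (by positivity) (by positivity), ← Real.rpow_mul (by positivity),
            ← Real.rpow_mul (by positivity), mul_one_div_cancel hq.ne', Real.rpow_one,
            show (q + 1) * (1 / q) = 1 + 1 / q by field_simp, Real.div_rpow zero_le_one hβ.le,
            Real.one_rpow, one_div_mul_eq_div]
  have hmass : 0 < henonMass α (2 * q) u ^ (1 / q) :=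
    Real.rpow_pos_of_pos (henonMass_pos hα0 (by linarith) hu) _
  rw [ray_two_mul_sub_one, le_div_iff₀ hmass]
  calc _ ≤ _ := mul_le_mul_of_nonneg_left hroot (by positivity)
    _ = dirichletEnergy u := by field_simp

theorem exists_mul_rpow_le_SradVal (N : ℕ) [NeZero N] (hq : 0 < q) :
    ∃ c > 0, ∀ᶠ α in atTop, c * α ^ (1 + 1 / q) ≤ SradVal N α (2 * q - 1) := by
  have hω := sphereArea_pos (N := N)
  refine ⟨sphereArea N * (1 / 2) ^ (1 + 1 / q) / (sphereArea N * Real.Gamma (q + 1)) ^ (1 / q),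
    by positivity, ?_⟩
  filter_upwards [eventually_gt_atTop 0, eventually_gt_atTop ((N - 1) * q),
    eventually_ge_atTop (2 * ((N - 1) * (q - 1)))] with α hα0 hα hα2
  refine le_SradVal fun u hu hrad => le_trans ?_ (le_ray_of_radial hq hα hu hrad)
  rw [div_mul_eq_mul_div, mul_assoc, ← Real.mul_rpow (by norm_num) hα0.le]
  gcongr
  linarith

end Radial

section Concentration

variable {N : ℕ} {φ : E N → ℝ} {z x : E N} {α q s : ℝ}

/-- The function `φ` shrunk by the factor `α` and recentred at `z`; the test functions for the
upper bound on `S_{α,p}` are of this form with `|z| = 1 - 1/α`. -/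
def concentrate (φ : E N → ℝ) (α : ℝ) (z x : E N) : ℝ := φ (α • (x - z))

lemma integral_comp_smul_sub (hα : 0 ≤ α) (F : E N → ℝ) (z : E N) :
    ∫ x, F (α • (x - z)) = (α ^ N)⁻¹ * ∫ x, F x := by
  rw [integral_sub_right_eq_self (fun x => F (α • x)) z, Measure.integral_comp_smul,
    finrank_euclideanSpace_fin, abs_of_nonneg (by positivity), smul_eq_mul]

lemma norm_gradient_concentrate (hα : 0 ≤ α) (x : E N) :
    ‖gradient (concentrate φ α z) x‖ = α * ‖gradient φ (α • (x - z))‖ := by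
  have hfderiv : fderiv ℝ (concentrate φ α z) x = α • fderiv ℝ φ (α • (x - z)) :=
    (fderiv_comp_sub (f := fun y => φ (α • y)) z).trans (fderiv_comp_smul α)
  rw [norm_gradient, norm_gradient, hfderiv, norm_smul, Real.norm_of_nonneg hα]

lemma dirichletEnergy_concentrate_le (hα : 0 < α) (hφ : ContDiff ℝ 1 φ)
    (hφ1 : HasCompactSupport φ) (z : E N) :
    dirichletEnergy (concentrate φ α z) ≤ α ^ 2 * ((α ^ N)⁻¹ * ∫ x, ‖gradient φ x‖ ^ 2) := by
  have hint : Integrable fun x => ‖gradient φ x‖ ^ 2 := by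
    simp only [norm_gradient]
    have hsupp : HasCompactSupport fun x => ‖fderiv ℝ φ x‖ ^ 2 :=
      (hφ1.fderiv ℝ).norm.comp_left (g := fun t : ℝ => t ^ 2) (by simp)
    exact ((hφ.continuous_fderiv one_ne_zero).norm.pow 2).integrable_of_hasCompactSupport hsupp
  simp only [dirichletEnergy, norm_gradient_concentrate hα.le, mul_pow]
  rw [integral_const_mul, ← integral_comp_smul_sub hα.le (fun x => ‖gradient φ x‖ ^ 2) z]
  exact mul_le_mul_of_nonneg_left (setIntegral_le_integral
    ((hint.comp_smul hα.ne').comp_sub_right z) (Eventually.of_forall fun _ => sq_nonneg _))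
    (sq_nonneg α)

lemma norm_mem_Ico_of_concentrate_ne_zero (hα : 0 < α) (hφ : Function.support φ ⊆ ball 0 1)
    (hz : ‖z‖ = 1 - 1 / α) (hx : concentrate φ α z x ≠ 0) : ‖x‖ ∈ Ico (1 - 2 / α) 1 := by
  have hxz : ‖x - z‖ < 1 / α := by
    have := mem_ball_zero_iff.1 (hφ hx)
    rwa [norm_smul, Real.norm_of_nonneg hα.le, ← lt_div_iff₀' hα] at this
  have hle := norm_sub_norm_le x z
  have hge := norm_sub_norm_le z x
  rw [norm_sub_rev] at hge
  constructor <;> linarith [show 2 / α = 1 / α + 1 / α by ring]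

lemma memC_concentrate (hα : 0 < α) (hφ : ContDiff ℝ 1 φ) (hφ1 : Function.support φ ⊆ ball 0 1)
    (hφ0 : φ 0 ≠ 0) (hz : ‖z‖ = 1 - 1 / α) : memC (concentrate φ α z) := by
  refine ⟨(hφ.comp ((contDiff_id.sub contDiff_const).const_smul α)).contDiffOn, fun x hx => ?_, z,
    ?_, by simpa [concentrate] using hφ0⟩
  · by_contra hne
    exact (norm_mem_Ico_of_concentrate_ne_zero hα hφ1 hz hne).2.ne hx
  · simp [hz, hα.le]

lemma le_henonMass_concentrate (hα : 2 ≤ α) (hs : 0 < s) (hφ : Continuous φ)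
    (hφ1 : Function.support φ ⊆ ball 0 1) (hz : ‖z‖ = 1 - 1 / α) :
    (1 - 2 / α) ^ α * ((α ^ N)⁻¹ * ∫ x, |φ x| ^ s) ≤ henonMass α s (concentrate φ α z) := by
  have hα0 : 0 < α := two_pos.trans_le hα
  have hnonneg : 0 ≤ 1 - 2 / α := sub_nonneg.2 (div_le_one_of_le₀ hα hα0.le)
  have hnorm {x : E N} (hx : concentrate φ α z x ≠ 0) :=
    norm_mem_Ico_of_concentrate_ne_zero hα0 hφ1 hz hx
  have hcont : Continuous (concentrate φ α z) :=
    hφ.comp ((continuous_id.sub continuous_const).const_smul α)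
  have hball : ∫ x, |concentrate φ α z x| ^ s = ∫ x in ball 0 1, |concentrate φ α z x| ^ s :=
    (setIntegral_eq_integral_of_forall_compl_eq_zero fun x hx => by
      have : concentrate φ α z x = 0 := by
        by_contra hne
        exact hx (mem_ball_zero_iff.2 (hnorm hne).2)
      rw [this, abs_zero, Real.zero_rpow hs.ne']).symm
  rw [← integral_comp_smul_sub hα0.le (fun x => |φ x| ^ s) z]
  change _ * ∫ x, |concentrate φ α z x| ^ s ≤ _
  rw [hball, ← integral_const_mul]
  refine integral_mono_of_nonneg (Eventually.of_forall fun x => by positivity)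
    (integrableOn_henonMass hα0.le hs.le hcont.continuousOn) (Eventually.of_forall fun x => ?_)
  rcases eq_or_ne (concentrate φ α z x) 0 with hx | hx
  · simp [hx, Real.zero_rpow hs.ne']
  · have := (hnorm hx).1
    dsimp only
    gcongr

lemma pow_two_mul_inv_pow_div_rpow {A B : ℝ} (hα : 0 < α) (hB : 0 ≤ B) :
    α ^ 2 * ((α ^ N)⁻¹ * A) / ((α ^ N)⁻¹ * B) ^ (1 / q) =
      A / B ^ (1 / q) * α ^ (2 - N + N / q) := by
  have hpow : α ^ (2 - N + N / q) = α ^ 2 * (α ^ N)⁻¹ / ((α ^ N)⁻¹) ^ (1 / q) := by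
    rw [← Real.rpow_natCast, ← Real.rpow_natCast, ← Real.rpow_neg hα.le, ← Real.rpow_mul hα.le,
      ← Real.rpow_add hα, ← Real.rpow_sub hα]
    congr 1
    push_cast
    ring
  rw [hpow, Real.mul_rpow (by positivity) hB]
  ring

theorem exists_Sval_le_mul_rpow (N : ℕ) [NeZero N] (hq : 0 < q) :
    ∃ C, ∀ᶠ α in atTop, Sval N α (2 * q - 1) ≤ C * α ^ (2 - N + N / q) := by
  obtain ⟨φ, htsupp, hsupp, hφ, -, hφ0⟩ := exists_contDiff_tsupport_subset (n := 1)
    (ball_mem_nhds (0 : E N) one_pos)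
  have hφ1 : Function.support φ ⊆ ball 0 1 := (subset_tsupport φ).trans htsupp
  replace hφ0 : φ 0 ≠ 0 := hφ0.trans_ne one_ne_zero
  have hmass : 0 < ∫ x, |φ x| ^ (2 * q) :=
    integral_abs_rpow_pos (by positivity) hφ.continuous hsupp hφ0
  refine ⟨(∫ x, ‖gradient φ x‖ ^ 2) / (Real.exp (-3) * ∫ x, |φ x| ^ (2 * q)) ^ (1 / q), ?_⟩
  have hexp : ∀ᶠ α : ℝ in atTop, Real.exp (-3) < (1 + (-2) / α) ^ α :=
    (Real.tendsto_one_add_div_rpow_exp (-2)).eventually_const_lt (by norm_num)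
  filter_upwards [hexp, eventually_ge_atTop 2] with α hα hα2
  have hα0 : 0 < α := by linarith
  rw [neg_div, ← sub_eq_add_neg] at hα
  obtain ⟨z, hz⟩ : ∃ z : E N, ‖z‖ = 1 - 1 / α :=
    exists_norm_eq _ (sub_nonneg.2 (div_le_one_of_le₀ (by linarith) hα0.le))
  have hden : (α ^ N)⁻¹ * (Real.exp (-3) * ∫ x, |φ x| ^ (2 * q))
      ≤ henonMass α (2 * q) (concentrate φ α z) := by
    refine le_trans ?_ (le_henonMass_concentrate hα2 (by positivity) hφ.continuous hφ1 hz)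
    rw [mul_left_comm]
    gcongr
  have hden_pos : 0 < (α ^ N)⁻¹ * (Real.exp (-3) * ∫ x, |φ x| ^ (2 * q)) :=
    mul_pos (by positivity) (mul_pos (Real.exp_pos _) hmass)
  calc Sval N α (2 * q - 1)
      ≤ ray α (2 * q - 1) (concentrate φ α z) :=
        Sval_le_ray (memC_concentrate hα0 hφ hφ1 hφ0 hz)
    _ ≤ α ^ 2 * ((α ^ N)⁻¹ * ∫ x, ‖gradient φ x‖ ^ 2) /
          ((α ^ N)⁻¹ * (Real.exp (-3) * ∫ x, |φ x| ^ (2 * q))) ^ (1 / q) := by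
        rw [ray_two_mul_sub_one]
        have henergy := dirichletEnergy_concentrate_le hα0 hφ hsupp z
        exact div_le_div₀ ((dirichletEnergy_nonneg _).trans henergy) henergy
          (Real.rpow_pos_of_pos hden_pos _) (Real.rpow_le_rpow hden_pos.le hden (by positivity))
    _ = _ := pow_two_mul_inv_pow_div_rpow hα0 (by positivity)

end Concentration

theorem eventually_Sval_lt_SradVal {N : ℕ} (hN : 2 ≤ N) {p : ℝ} (hp : 1 < p) :
    ∀ᶠ α in atTop, Sval N α p < SradVal N α p := by
  obtain ⟨q, rfl⟩ : ∃ q : ℝ, p = 2 * q - 1 := ⟨(p + 1) / 2, by ring⟩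
  have hq : 1 < q := by linarith
  have : NeZero N := ⟨by omega⟩
  have hgap : 2 - N + N / q < 1 + 1 / q := by
    have hN1 : 0 < (N : ℝ) - 1 := sub_pos.2 (Nat.one_lt_cast.2 hN)
    have := mul_pos hN1 (sub_pos.2 (inv_lt_one_of_one_lt₀ hq))
    linear_combination this
  obtain ⟨c, hc, hlower⟩ := exists_mul_rpow_le_SradVal N (one_pos.trans hq)
  obtain ⟨C, hupper⟩ := exists_Sval_le_mul_rpow N (one_pos.trans hq)
  filter_upwards [hlower, hupper, eventually_mul_rpow_lt_mul_rpow hgap hc C] with α hl hu hlt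
  exact hu.trans_lt (hlt.trans_le hl)

theorem stmt4_general {N : ℕ} (hN : 2 ≤ N) {p : ℝ} (hp : 1 < p) :
    ∃ αstar : ℝ, 0 < αstar ∧ ∀ α : ℝ, αstar < α → Sval N α p < SradVal N α p :=
  let ⟨a, ha⟩ := eventually_atTop.1 (eventually_Sval_lt_SradVal hN hp)
  ⟨max a 1, by positivity, fun α hα => ha α ((le_max_left a 1).trans hα.le)⟩

/-- Smets–Su–Willem symmetry breaking: for α large no minimizer of the Rayleigh
quotient R_{α,p} over 𝒞 is radial. -/
theorem stmt4 {N : ℕ} (hN : 2 ≤ N) (p : ℝ) (hp : 1 < p)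
    (hsub : 3 ≤ N → p + 1 < 2 * (N : ℝ) / ((N : ℝ) - 2)) :
    ∃ αstar : ℝ, 0 < αstar ∧ ∀ α : ℝ, αstar < α →
      ∀ u : E N → ℝ, memC u → ray α p u = Sval N α p →
        ∃ x y : E N, x ∈ ball (0 : E N) 1 ∧ y ∈ ball (0 : E N) 1 ∧
          ‖x‖ = ‖y‖ ∧ u x ≠ u y := by
  obtain ⟨αstar, hpos, hgap⟩ := stmt4_general hN hp
  exact ⟨αstar, hpos, fun α hα _ hu hmin => exists_ne_of_Sval_lt_SradVal (hgap α hα) hu hmin⟩
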